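/- arXiv:2404.06308 — 2 statements merged into one kernel-verified Lean document; each statement's English description precedes it below -/
import Mathlib

section
/- Let w be a group-word in n variables and let v = [w(x_1,...,x_n), x_{n+1}, ..., x_{n+m}]. If G is an FC(w)-group, then G is an FC(v)-group. -/
/-- The set of `w`-values in `G`: images of the word `w` (an element of the free
group on `n` generators) under all homomorphisms `FreeGroup (Fin n) →* G`. -/
def wValues {n : ℕ} (w : FreeGroup (Fin n)) (G : Type*) [Group G] : Set G :=
  Set.range fun g : Fin n → G => FreeGroup.lift g w

/-- `G_w^* = G_w ∪ G_w⁻¹`. -/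
def wValuesStar {n : ℕ} (w : FreeGroup (Fin n)) (G : Type*) [Group G] : Set G :=
  wValues w G ∪ (wValues w G)⁻¹

/-- The verbal subgroup `w(G)` generated by all `w`-values. -/
def verbalSubgroup {n : ℕ} (w : FreeGroup (Fin n)) (G : Type*) [Group G] : Subgroup G :=
  Subgroup.closure (wValues w G)

/-- The iterated commutator subgroup `[H, G, ..., G]` with `G` repeated `k` times. -/
def iterCommSub (G : Type*) [Group G] (H : Subgroup G) : ℕ → Subgroup G
  | 0 => H
  | k + 1 => ⁅iterCommSub G H k, (⊤ : Subgroup G)⁆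

/-- The set of conjugates `x^S = {g⁻¹ x g : g ∈ S}`. -/
def conjSet {G : Type*} [Group G] (x : G) (S : Set G) : Set G :=
  (fun g => g⁻¹ * x * g) '' S

/-- `G` is an `FC(w)`-group: every conjugacy set `x^{G_w}` is finite. -/
def IsFCw {n : ℕ} (w : FreeGroup (Fin n)) (G : Type*) [Group G] : Prop :=
  ∀ x : G, (conjSet x (wValues w G)).Finite

/-- `G` is a `BFC(w)`-group: the sets `x^{G_w}` are finite of bounded size. -/
def IsBFCw {n : ℕ} (w : FreeGroup (Fin n)) (G : Type*) [Group G] : Prop :=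
  ∃ c : ℕ, ∀ x : G,
    (conjSet x (wValues w G)).Finite ∧ (conjSet x (wValues w G)).ncard ≤ c

/-- A subgroup `H` is `FC`-embedded in `G` if `x^H` is finite for every `x ∈ G`. -/
def IsFCEmbedded {G : Type*} [Group G] (H : Subgroup G) : Prop :=
  ∀ x : G, (conjSet x (H : Set G)).Finite

/-- A subgroup `H` is `BFC`-embedded in `G` if the sets `x^H` are finite of bounded size. -/
def IsBFCEmbedded {G : Type*} [Group G] (H : Subgroup G) : Prop :=
  ∃ d : ℕ, ∀ x : G,
    (conjSet x (H : Set G)).Finite ∧ (conjSet x (H : Set G)).ncard ≤ d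

/-- A word `w` is `(1/k)`-concise (`k ≥ 1`): in every group `G` with `G_w` finite,
the subgroup `[w(G), G, ..., G]` (with `G` repeated `k - 1` times) is finite. -/
def IsFracConcise {n : ℕ} (w : FreeGroup (Fin n)) (k : ℕ) : Prop :=
  ∀ (G : Type*) [Group G], (wValues w G).Finite →
    ((iterCommSub G (verbalSubgroup w G) (k - 1) : Subgroup G) : Set G).Finite

/-- A word `w` is `0`-concise: in every group `G` with `G_w` finite, some iterated
commutator subgroup `[w(G), G, ..., G]` is finite. -/
def IsZeroConcise {n : ℕ} (w : FreeGroup (Fin n)) : Prop :=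
  ∀ (G : Type*) [Group G], (wValues w G).Finite →
    ∃ k : ℕ, ((iterCommSub G (verbalSubgroup w G) k : Subgroup G) : Set G).Finite

/-- The commutator `[a, b] = a⁻¹ b⁻¹ a b`. -/
def pcomm {G : Type*} [Group G] (a b : G) : G := a⁻¹ * b⁻¹ * a * b

/-- The word `w(x_1, ..., x_n)` viewed in the free group on `n + m` generators. -/
def extendWord {n : ℕ} (m : ℕ) (w : FreeGroup (Fin n)) : FreeGroup (Fin (n + m)) :=
  FreeGroup.map (Fin.castAdd m) w

/-- The word `v = [w(x_1, ..., x_n), x_{n+1}, ..., x_{n+m}]`. -/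
def commWord {n : ℕ} (m : ℕ) (w : FreeGroup (Fin n)) : FreeGroup (Fin (n + m)) :=
  (List.ofFn fun i : Fin m => FreeGroup.of (Fin.natAdd n i)).foldl pcomm (extendWord m w)

/-- The iterated commutator `[y, b, ..., b]` with `b` repeated `k` times. -/
def iterPcomm {G : Type*} [Group G] (y b : G) : ℕ → G
  | 0 => y
  | k + 1 => pcomm (iterPcomm y b k) b

/-!
Call `S ⊆ G` normal FC if it is closed under conjugation and every `x^S` is finite. Conjugating
`x` by `[s, g] = s⁻¹ s^g` amounts to conjugating first by `s⁻¹` and then by `s^g ∈ S`. So, once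
`{s x s⁻¹ : s ∈ S}` is known to be finite, the commutators `[s, g]` again form a normal FC set, and
the theorem follows by iteration.

The finiteness of `{s x s⁻¹ : s ∈ S}` comes from a uniform bound: every finite `T ⊆ S` satisfies
`|{t x t⁻¹ : t ∈ T}| ≤ |x^S|`. Let `H = ⟨T⟩` act by conjugation on the `H`-orbit `Ω` of `x`, and let
`Q` be the image of `H` in `Sym Ω`. The action of `s ∈ S ∩ H` on `Ω` is determined by how `s⁻¹`
conjugates `x` and the members of `T`, because an element of `H` that centralizes `T` and `x` acts
trivially on `Ω`. So the image `E` of `S ∩ H` in `Q` is a finite normal generating set. An element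
of the point stabilizer `V` of `Q` commuting with `E` is trivial, hence `V` is finite. Finally
`E⁻¹V = (VE)⁻¹ = (EV)⁻¹` gives `|E • x| = |EV| / |V| = |E⁻¹V| / |V| = |E⁻¹ • x|`, and
`E⁻¹ • x ⊆ x^S`.
-/

open scoped Pointwise

/-- A normal subset of a group: one that is closed under conjugation, such as the set of values of
a word. -/
def IsNormalSubset {G : Type*} [Group G] (S : Set G) : Prop :=
  ∀ ⦃s⦄, s ∈ S → ∀ g : G, g * s * g⁻¹ ∈ S

/-- A normal subset `S` such that `x^S` is finite for every `x`. The group `G` is an `FC(w)`-group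
exactly when its set of `w`-values has this property; unlike the set of values of a word, the notion
restricts to subgroups. -/
structure IsNormalFC {G : Type*} [Group G] (S : Set G) : Prop where
  isNormalSubset : IsNormalSubset S
  finite_conjSet : ∀ x : G, (conjSet x S).Finite

/-- The set of commutators `[s, g]` with `s ∈ S` and `g` arbitrary. Its `m`-th iterate at the
set of `w`-values contains the values of `[w, x_{n+1}, ..., x_{n+m}]`. -/
def commutatorsWith {G : Type*} [Group G] (S : Set G) : Set G :=
  Set.image2 pcomm S Set.univ

section NormalSubset

variable {G H : Type*} [Group G] [Group H]

theorem IsNormalSubset.preimage {S : Set H} (hS : IsNormalSubset S) (f : G →* H) :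
    IsNormalSubset (f ⁻¹' S) := fun s hs g => by
  simpa only [Set.mem_preimage, map_mul, map_inv] using hS hs (f g)

theorem IsNormalSubset.image {S : Set G} (hS : IsNormalSubset S) {f : G →* H}
    (hf : Function.Surjective f) : IsNormalSubset (f '' S) := by
  rintro _ ⟨s, hs, rfl⟩ h
  obtain ⟨g, rfl⟩ := hf h
  exact ⟨g * s * g⁻¹, hS hs g, by simp only [map_mul, map_inv]⟩

theorem IsNormalSubset.mul_comm {S : Set G} (hS : IsNormalSubset S) (T : Set G) :
    S * T = T * S := by
  apply Set.Subset.antisymm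
  · rintro _ ⟨s, hs, t, ht, rfl⟩
    exact ⟨t, ht, t⁻¹ * s * t, by simpa using hS hs t⁻¹, by group⟩
  · rintro _ ⟨t, ht, s, hs, rfl⟩
    exact ⟨t * s * t⁻¹, hS hs t, t, ht, by group⟩

theorem mem_center_of_forall_commute {S : Set G} (hS : Subgroup.closure S = ⊤) {z : G}
    (hz : ∀ s ∈ S, s * z = z * s) : z ∈ Subgroup.center G := by
  rw [← Subgroup.centralizer_univ, ← Subgroup.coe_top, ← hS, Subgroup.centralizer_closure]
  exact Subgroup.mem_centralizer_iff.2 hz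

theorem IsNormalFC.preimage {S : Set H} (hS : IsNormalFC S) {f : G →* H}
    (hf : Function.Injective f) : IsNormalFC (f ⁻¹' S) where
  isNormalSubset := hS.isNormalSubset.preimage f
  finite_conjSet x := by
    refine ((hS.finite_conjSet (f x)).preimage hf.injOn).subset ?_
    rintro _ ⟨s, hs, rfl⟩
    exact ⟨f s, hs, by simp only [map_mul, map_inv]⟩

end NormalSubset

section Action

variable {G α : Type*} [Group G] [MulAction G α]

theorem ncard_mul_stabilizer (E : Set G) (a : α) :
    (E * (MulAction.stabilizer G a : Set G)).ncard =
      Nat.card (MulAction.stabilizer G a) * ((· • a) '' E).ncard := by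
  have orbit_eq : (· • a) '' E =
      MulAction.ofQuotientStabilizer G a '' (QuotientGroup.mk '' E) := by
    rw [Set.image_image]
    rfl
  rw [orbit_eq, Set.ncard_image_of_injective _ (MulAction.injective_ofQuotientStabilizer G a)]
  exact Subgroup.card_mul_eq_card_subgroup_mul_card_quotient _ E

theorem IsNormalSubset.ncard_smul_eq_ncard_inv_smul {E : Set G} (hE : IsNormalSubset E) (a : α)
    [Finite (MulAction.stabilizer G a)] :
    ((· • a) '' E).ncard = ((·⁻¹ • a) '' E).ncard := by
  set V := MulAction.stabilizer G a
  have inv_smul_eq : (·⁻¹ • a) '' E = (· • a) '' E⁻¹ := by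
    rw [← Set.image_inv_eq_inv, Set.image_image]
  have inv_mul_eq : E⁻¹ * (V : Set G) = (E * (V : Set G))⁻¹ := by
    rw [hE.mul_comm, mul_inv_rev, inv_coe_set]
  apply Nat.eq_of_mul_eq_mul_left (Nat.card_pos (α := V))
  rw [inv_smul_eq, ← ncard_mul_stabilizer, ← ncard_mul_stabilizer, inv_mul_eq, Set.ncard_inv]

theorem smul_eq_self_of_mem_center [MulAction.IsPretransitive G α] {z : G}
    (hz : z ∈ Subgroup.center G) {a : α} (hza : z • a = a) (b : α) : z • b = b := by
  obtain ⟨g, rfl⟩ := MulAction.exists_smul_eq G a b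
  rw [smul_smul, ← Subgroup.mem_center_iff.1 hz g, mul_smul, hza]

theorem IsNormalSubset.finite_stabilizer [MulAction.IsPretransitive G α] [FaithfulSMul G α]
    {E : Set G} (hE : IsNormalSubset E) (hfin : E.Finite) (hgen : Subgroup.closure E = ⊤) (a : α) :
    Finite (MulAction.stabilizer G a) := by
  have : Finite E := hfin
  let conjOn (v : MulAction.stabilizer G a) (e : E) : E := ⟨v * e * (v : G)⁻¹, hE e.2 v⟩
  refine Finite.of_injective conjOn fun u v huv => Subtype.ext ?_
  have central : (u : G)⁻¹ * v ∈ Subgroup.center G := by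
    refine mem_center_of_forall_commute hgen fun e he => ?_
    have conj_eq : (u : G) * e * (u : G)⁻¹ = v * e * (v : G)⁻¹ :=
      congrArg Subtype.val (congrFun huv ⟨e, he⟩)
    calc e * ((u : G)⁻¹ * v) = (u : G)⁻¹ * (u * e * (u : G)⁻¹) * v := by group
      _ = (u : G)⁻¹ * v * e := by rw [conj_eq]; group
  have fixes : ((u : G)⁻¹ * v) • a = a := (u⁻¹ * v).2
  have eq_one : (u : G)⁻¹ * v = 1 := eq_of_smul_eq_smul fun b : α => by
    rw [smul_eq_self_of_mem_center central fixes b, one_smul]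
  exact inv_mul_eq_one.1 eq_one

theorem IsNormalSubset.ncard_smul_eq_of_finite_toPermHom_image [MulAction.IsPretransitive G α]
    {S : Set G} (hS : IsNormalSubset S) (hgen : Subgroup.closure S = ⊤)
    (hfin : (MulAction.toPermHom G α '' S).Finite) (a : α) :
    ((· • a) '' S).ncard = ((·⁻¹ • a) '' S).ncard := by
  let ρ := (MulAction.toPermHom G α).rangeRestrict
  have hρ : Function.Surjective ρ := MonoidHom.rangeRestrict_surjective _
  have : MulAction.IsPretransitive (MulAction.toPermHom G α).range α :=
    ⟨fun b c => (MulAction.exists_smul_eq G b c).imp' ρ fun _ h => h⟩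
  have hE : IsNormalSubset (ρ '' S) := hS.image hρ
  have finite_image : (ρ '' S).Finite := by
    refine Set.Finite.of_finite_image ?_ Subtype.val_injective.injOn
    rwa [Set.image_image]
  have closure_image : Subgroup.closure (ρ '' S) = ⊤ := by
    rw [← MonoidHom.map_closure, hgen, Subgroup.map_top_of_surjective ρ hρ]
  have := hE.finite_stabilizer finite_image closure_image a
  have ncard_eq := hE.ncard_smul_eq_ncard_inv_smul a
  rw [Set.image_image, Set.image_image] at ncard_eq
  exact ncard_eq

theorem finite_toPermHom_image_of_finite_conjSet [MulAction.IsPretransitive G α] {S T : Set G}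
    (hS : ∀ g : G, (conjSet g S).Finite) (hT : T.Finite) (hgen : Subgroup.closure T = ⊤) {a : α}
    (ha : ((·⁻¹ • a) '' S).Finite) : (MulAction.toPermHom G α '' S).Finite := by
  have : Finite T := hT
  let invAction (s : G) : α × (T → G) := (s⁻¹ • a, fun t => s⁻¹ * t * s)
  have finite_invAction : (invAction '' S).Finite := by
    refine (ha.prod (Set.Finite.pi' fun t : T => hS t)).subset ?_
    rintro _ ⟨s, hs, rfl⟩
    exact ⟨⟨s, hs, rfl⟩, fun t => ⟨s, hs, rfl⟩⟩
  have factors : Function.FactorsThrough (MulAction.toPermHom G α) invAction := fun r s h => by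
    have smul_eq : r⁻¹ • a = s⁻¹ • a := congrArg Prod.fst h
    have central : s * r⁻¹ ∈ Subgroup.center G := by
      refine mem_center_of_forall_commute hgen fun t ht => ?_
      have conj_eq : r⁻¹ * t * r = s⁻¹ * t * s := congrFun (congrArg Prod.snd h) ⟨t, ht⟩
      calc t * (s * r⁻¹) = s * (s⁻¹ * t * s) * r⁻¹ := by group
        _ = s * r⁻¹ * t := by rw [← conj_eq]; group
    have fixes : (s * r⁻¹) • a = a := by rw [mul_smul, smul_eq, smul_inv_smul]
    ext b
    have := smul_eq_self_of_mem_center central fixes (r • b)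
    rw [mul_smul, inv_smul_smul] at this
    exact this.symm
  have image_eq : MulAction.toPermHom G α '' S =
      Function.extend invAction (MulAction.toPermHom G α) 1 '' (invAction '' S) := by
    rw [Set.image_image]
    exact Set.image_congr fun s _ => (factors.extend_apply 1 s).symm
  rw [image_eq]
  exact finite_invAction.image _

theorem IsNormalFC.ncard_smul_le {S T : Set G} (hS : IsNormalFC S) (hTS : T ⊆ S) (hT : T.Finite)
    {a : α} (ha : ((·⁻¹ • a) '' S).Finite) :
    ((· • a) '' T).ncard ≤ ((·⁻¹ • a) '' S).ncard := by
  let H := Subgroup.closure T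
  let F : Set H := H.subtype ⁻¹' S
  let a' : MulAction.orbit H a := ⟨a, MulAction.mem_orbit_self a⟩
  have hF : IsNormalFC F := hS.preimage H.subtype_injective
  have inv_smul_subset : Subtype.val '' ((·⁻¹ • a') '' F) ⊆ (·⁻¹ • a) '' S := by
    rintro _ ⟨_, ⟨s, hs, rfl⟩, rfl⟩
    exact ⟨s, hs, rfl⟩
  have subset_smul : (· • a) '' T ⊆ Subtype.val '' ((· • a') '' F) := by
    rintro _ ⟨t, ht, rfl⟩
    exact ⟨_, ⟨⟨t, Subgroup.subset_closure ht⟩, hTS ht, rfl⟩, rfl⟩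
  have finite_image : (MulAction.toPermHom H (MulAction.orbit H a) '' F).Finite :=
    finite_toPermHom_image_of_finite_conjSet hF.finite_conjSet
      (hT.preimage Subtype.val_injective.injOn)
      (Subgroup.closure_closure_coe_preimage (k := T))
      ((ha.subset inv_smul_subset).of_finite_image Subtype.val_injective.injOn)
  have finite_smul : ((· • a') '' F).Finite := by
    refine (finite_image.image fun σ => σ a').subset ?_
    rw [Set.image_image]
    rfl
  have closure_F : Subgroup.closure F = ⊤ := by
    rw [eq_top_iff, ← Subgroup.closure_closure_coe_preimage (k := T)]
    exact Subgroup.closure_mono (Set.preimage_mono hTS)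
  calc ((· • a) '' T).ncard
      ≤ (Subtype.val '' ((· • a') '' F)).ncard :=
        Set.ncard_le_ncard subset_smul (finite_smul.image _)
    _ = ((· • a') '' F).ncard := Set.ncard_image_of_injective _ Subtype.val_injective
    _ = ((·⁻¹ • a') '' F).ncard :=
        hF.isNormalSubset.ncard_smul_eq_of_finite_toPermHom_image closure_F finite_image a'
    _ = (Subtype.val '' ((·⁻¹ • a') '' F)).ncard :=
        (Set.ncard_image_of_injective _ Subtype.val_injective).symm
    _ ≤ ((·⁻¹ • a) '' S).ncard := Set.ncard_le_ncard inv_smul_subset ha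

theorem IsNormalFC.finite_smul {S : Set G} (hS : IsNormalFC S) {a : α}
    (ha : ((·⁻¹ • a) '' S).Finite) : ((· • a) '' S).Finite := by
  by_contra hinf
  obtain ⟨_, hsub, hfin, hcard⟩ :=
    Set.Infinite.exists_subset_ncard_eq hinf (((·⁻¹ • a) '' S).ncard + 1)
  obtain ⟨T, hTS, hT, rfl⟩ := Set.exists_subset_image_finite_and.1 ⟨_, hsub, hfin, rfl⟩
  have := hS.ncard_smul_le hTS hT ha
  omega

end Action

section Commutators

variable {G H : Type*} [Group G] [Group H]

theorem IsNormalFC.finite_conjSet_inv {S : Set G} (hS : IsNormalFC S) (x : G) :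
    (conjSet x S⁻¹).Finite := by
  have hS' : IsNormalFC (ConjAct.toConjAct '' S) := by
    rw [show ConjAct.toConjAct '' S = ConjAct.ofConjAct ⁻¹' S from
      ConjAct.toConjAct.toEquiv.image_eq_preimage_symm S]
    exact hS.preimage (f := ConjAct.ofConjAct.toMonoidHom) ConjAct.ofConjAct.injective
  have inv_smul_eq : (·⁻¹ • x) '' (ConjAct.toConjAct '' S) = conjSet x S := by
    simp only [conjSet, Set.image_image, ← ConjAct.toConjAct_inv, ConjAct.toConjAct_smul, inv_inv]
  have smul_eq : (· • x) '' (ConjAct.toConjAct '' S) = conjSet x S⁻¹ := by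
    simp only [conjSet, Set.image_image, ← Set.image_inv_eq_inv, ConjAct.toConjAct_smul, inv_inv]
  rw [← smul_eq]
  exact hS'.finite_smul (inv_smul_eq ▸ hS.finite_conjSet x)

theorem IsNormalFC.commutatorsWith {S : Set G} (hS : IsNormalFC S) :
    IsNormalFC (commutatorsWith S) where
  isNormalSubset := by
    rintro _ ⟨s, hs, h, -, rfl⟩ g
    exact ⟨g * s * g⁻¹, hS.isNormalSubset hs g, g * h * g⁻¹, Set.mem_univ _, by
      simp only [pcomm]; group⟩
  finite_conjSet x := by
    refine ((hS.finite_conjSet_inv x).biUnion fun y _ => hS.finite_conjSet y).subset ?_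
    rintro _ ⟨_, ⟨s, hs, g, -, rfl⟩, rfl⟩
    refine Set.mem_biUnion ⟨s⁻¹, Set.inv_mem_inv.2 hs, rfl⟩
      ⟨g⁻¹ * s * g⁻¹⁻¹, hS.isNormalSubset hs g⁻¹, ?_⟩
    simp only [pcomm]
    group

theorem map_foldl_pcomm (f : G →* H) (l : List G) (a : G) :
    f (l.foldl pcomm a) = (l.map f).foldl pcomm (f a) := by
  rw [List.foldl_map]
  exact (List.foldl_hom f fun _ _ => by simp only [pcomm, map_mul, map_inv]).symm

theorem foldl_pcomm_mem_iterate_commutatorsWith (l : List G) {S : Set G} {s : G} (hs : s ∈ S) :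
    l.foldl pcomm s ∈ commutatorsWith^[l.length] S := by
  induction l generalizing S s with
  | nil => exact hs
  | cons g _ ih => exact ih (Set.mem_image2_of_mem hs (Set.mem_univ g))

end Commutators

section Words

variable {n : ℕ} (w : FreeGroup (Fin n)) (G : Type*) [Group G]

theorem isNormalSubset_wValues : IsNormalSubset (wValues w G) := by
  rintro _ ⟨a, rfl⟩ g
  have lift_conj : FreeGroup.lift (fun i => g * a i * g⁻¹) =
      (MulAut.conj g).toMonoidHom.comp (FreeGroup.lift a) := by
    ext i
    simp
  exact ⟨fun i => g * a i * g⁻¹, DFunLike.congr_fun lift_conj w⟩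

theorem wValues_commWord_subset (m : ℕ) :
    wValues (commWord m w) G ⊆ commutatorsWith^[m] (wValues w G) := by
  rintro _ ⟨a, rfl⟩
  have lift_comp_map : FreeGroup.lift (a ∘ Fin.castAdd m) =
      (FreeGroup.lift a).comp (FreeGroup.map (Fin.castAdd m)) := by
    ext i
    simp
  have lift_extendWord : FreeGroup.lift a (extendWord m w) ∈ wValues w G :=
    ⟨a ∘ Fin.castAdd m, DFunLike.congr_fun lift_comp_map w⟩
  have := foldl_pcomm_mem_iterate_commutatorsWith
    ((List.ofFn fun i : Fin m => FreeGroup.of (Fin.natAdd n i)).map (FreeGroup.lift a))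
    lift_extendWord
  rwa [← map_foldl_pcomm, List.length_map, List.length_ofFn] at this

end Words

/-- if `G` is an `FC(w)`-group, then `G` is an `FC(v)`-group, where
`v = [w, x_{n+1}, ..., x_{n+m}]`. -/
theorem statement_1 {n m : ℕ} (w : FreeGroup (Fin n)) (G : Type*) [Group G]
    (h : IsFCw w G) : IsFCw (commWord m w) G := by
  have hw : IsNormalFC (wValues w G) := ⟨isNormalSubset_wValues w G, h⟩
  have hiter : IsNormalFC (commutatorsWith^[m] (wValues w G)) :=
    Function.Iterate.rec IsNormalFC hw (fun _ hS => hS.commutatorsWith) m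
  exact fun x => (hiter.finite_conjSet x).subset (Set.image_mono (wValues_commWord_subset w G m))
end

section
/- Let m ∈ ℕ and let w be a (1/(m+1))-concise group-word in n variables; set v = [w(x_1,...,x_n), x_{n+1}, ..., x_{n+m}]. Let G be an FC(w)-group and let B be a finite subset of G_v^*. Then for every x ∈ G there exists a positive integer e such that b^e lies in the center of the subgroup generated by x together with B, for every b ∈ B. -/
/-!
Fix a `v`-value `a` and a finite subset `S` of `G`, and let `H` be the subgroup generated by `S`
and the arguments at which `a` is evaluated. An element of `H` is determined modulo `Z(H)` by the
conjugates under it of the finitely many generators, so the `FC(w)`-condition leaves only finitely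
many `w`-values in `H / Z(H)`. Conciseness then makes `[w(H / Z(H)), H / Z(H), ..., H / Z(H)]`,
with `m` commutators, finite. The image of `a` lies in that subgroup, so some power of `a` is
central in `H` and in particular commutes with `S`.
-/

theorem exists_pos_forall_pow_mem {M : Type*} [Monoid M] {N : Submonoid M} {B : Set M}
    (hB : B.Finite) (h : ∀ b ∈ B, ∃ e : ℕ, 0 < e ∧ b ^ e ∈ N) :
    ∃ e : ℕ, 0 < e ∧ ∀ b ∈ B, b ^ e ∈ N := by
  choose! E hpos hmem using h
  refine ⟨∏ b ∈ hB.toFinset, E b, Finset.prod_pos fun b hb => hpos b (hB.mem_toFinset.1 hb),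
    fun b hb => ?_⟩
  obtain ⟨c, hc⟩ := Finset.dvd_prod_of_mem E (hB.mem_toFinset.2 hb)
  rw [hc, pow_mul]
  exact pow_mem (hmem b hb) c

theorem countable_of_group_fg (G : Type*) [Group G] [hG : Group.FG G] : Countable G := by
  obtain ⟨α, _, φ, hφ⟩ := Group.fg_iff_exists_freeGroup_hom_surjective_finite.1 hG
  exact hφ.countable

section Words

variable {n : ℕ} {w : FreeGroup (Fin n)} {G H : Type*} [Group G] [Group H]

theorem map_freeGroup_lift {α : Type*} (f : G →* H) (g : α → G) (w : FreeGroup α) :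
    f (FreeGroup.lift g w) = FreeGroup.lift (f ∘ g) w := by
  have hcomp : f.comp (FreeGroup.lift g) = FreeGroup.lift (f ∘ g) := by ext; simp
  exact DFunLike.congr_fun hcomp w

theorem map_mem_wValues (f : G →* H) {a : G} (ha : a ∈ wValues w G) : f a ∈ wValues w H := by
  obtain ⟨g, rfl⟩ := ha
  exact ⟨f ∘ g, (map_freeGroup_lift f g w).symm⟩

theorem image_wValues_of_surjective {f : G →* H} (hf : Function.Surjective f) :
    f '' wValues w G = wValues w H := by
  refine Set.Subset.antisymm (Set.image_subset_iff.2 fun _ => map_mem_wValues f) ?_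
  rintro _ ⟨k, rfl⟩
  obtain ⟨g, rfl⟩ := hf.comp_left k
  exact ⟨_, ⟨g, rfl⟩, map_freeGroup_lift f g w⟩

theorem map_pcomm (f : G →* H) (a b : G) : f (pcomm a b) = pcomm (f a) (f b) := by
  simp [pcomm]

theorem pcomm_mem_commutator {K L : Subgroup G} {a b : G} (ha : a ∈ K) (hb : b ∈ L) :
    pcomm a b ∈ ⁅K, L⁆ := by
  simpa [pcomm, commutatorElement_def] using
    Subgroup.commutator_mem_commutator (inv_mem ha) (inv_mem hb)

theorem foldl_pcomm_mem_iterCommSub {K : Subgroup G} {a : G} (ha : a ∈ K) (l : List G) :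
    l.foldl pcomm a ∈ iterCommSub G K l.length := by
  induction l using List.reverseRecOn with
  | nil => exact ha
  | append_singleton l c ih =>
    rw [List.foldl_append, List.length_append]
    exact pcomm_mem_commutator ih (Subgroup.mem_top c)

theorem lift_extendWord {m : ℕ} (g : Fin (n + m) → G) (w : FreeGroup (Fin n)) :
    FreeGroup.lift g (extendWord m w) = FreeGroup.lift (g ∘ Fin.castAdd m) w := by
  rw [extendWord, FreeGroup.map_eq_lift, map_freeGroup_lift]
  congr 2
  ext i
  simp

theorem lift_commWord {m : ℕ} (g : Fin (n + m) → G) (w : FreeGroup (Fin n)) :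
    FreeGroup.lift g (commWord m w) =
      (List.ofFn (g ∘ Fin.natAdd n)).foldl pcomm (FreeGroup.lift (g ∘ Fin.castAdd m) w) := by
  rw [commWord, ← List.foldl_hom (FreeGroup.lift g) (g₂ := fun a b => pcomm a (FreeGroup.lift g b))
    (fun a b => (map_pcomm _ a b).symm), lift_extendWord, ← List.foldl_map, List.map_ofFn]
  congr 2
  ext i
  simp

theorem wValues_commWord_subset_s2 (m : ℕ) (w : FreeGroup (Fin n)) (G : Type*) [Group G] :
    wValues (commWord m w) G ⊆ iterCommSub G (verbalSubgroup w G) m := by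
  rintro _ ⟨g, rfl⟩
  have hbase : FreeGroup.lift (g ∘ Fin.castAdd m) w ∈ verbalSubgroup w G :=
    Subgroup.subset_closure ⟨_, rfl⟩
  simpa [lift_commWord] using
    foldl_pcomm_mem_iterCommSub hbase (List.ofFn (g ∘ Fin.natAdd n))

end Words

section FC

variable {n : ℕ} {w : FreeGroup (Fin n)} {G H : Type*} [Group G] [Group H]

theorem finite_image_mk_center {S A : Set G} (hS : S.Finite) (hgen : Subgroup.closure S = ⊤)
    (hA : ∀ s ∈ S, (conjSet s A).Finite) :
    (QuotientGroup.mk' (Subgroup.center G) '' A).Finite := by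
  have := hS.to_subtype
  -- Inverting `q` makes the `s`-coordinate at the class of `a` equal to `a⁻¹ * s * a * s⁻¹`, the
  -- conjugate of `s` under `a` up to the fixed factor `s⁻¹`.
  let ψ : G ⧸ Subgroup.center G → S → commutatorSet G :=
    fun q => Subgroup.quotientCenterEmbedding hgen q⁻¹
  have hψ : Function.Injective ψ :=
    (Subgroup.quotientCenterEmbedding hgen).injective.comp inv_injective
  have hfin (s : S) : {c : commutatorSet G | (c : G) * s ∈ conjSet (s : G) A}.Finite :=
    (hA s s.2).preimage ((mul_left_injective (s : G)).comp Subtype.val_injective).injOn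
  refine Set.Finite.of_finite_image ((Set.Finite.pi' hfin).subset ?_) hψ.injOn
  rintro _ ⟨_, ⟨a, ha, rfl⟩, rfl⟩ s
  have hcoord : (ψ (QuotientGroup.mk' (Subgroup.center G) a) s : G) =
      a⁻¹ * s * a⁻¹⁻¹ * (s : G)⁻¹ := rfl
  exact ⟨a, ha, by rw [hcoord]; group⟩

theorem IsFCw.of_injective {f : H →* G} (hf : Function.Injective f) (hG : IsFCw w G) :
    IsFCw w H := by
  intro x
  refine Set.Finite.of_finite_image ((hG (f x)).subset ?_) hf.injOn
  rintro _ ⟨_, ⟨a, ha, rfl⟩, rfl⟩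
  exact ⟨f a, map_mem_wValues f ha, by simp⟩

theorem IsFCw.finite_wValues_quotient_center [Group.FG G] (hG : IsFCw w G) :
    (wValues w (G ⧸ Subgroup.center G)).Finite := by
  obtain ⟨S, hgen, hS⟩ := Group.fg_iff.1 ‹Group.FG G›
  rw [← image_wValues_of_surjective (QuotientGroup.mk'_surjective (Subgroup.center G))]
  exact finite_image_mk_center hS hgen fun s _ => hG s

end FC

section Concise

universe u

variable {n m : ℕ} {w : FreeGroup (Fin n)} {G : Type*} [Group G]

theorem IsFracConcise.isOfFinOrder {G : Type u} [Group G] (hw : IsFracConcise.{u} w (m + 1))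
    (hfin : (wValues w G).Finite) {a : G} (ha : a ∈ wValues (commWord m w) G) :
    IsOfFinOrder a := by
  let K : Subgroup G := iterCommSub G (verbalSubgroup w G) m
  have : Finite K := hw G hfin
  exact K.subtype.isOfFinOrder (isOfFinOrder_of_finite ⟨a, wValues_commWord_subset_s2 m w G ha⟩)

-- `IsFracConcise.{u}` only speaks about groups in `Type u`; `Shrink` moves `G` there.
theorem IsFracConcise.isOfFinOrder_of_small [Small.{u} G] (hw : IsFracConcise.{u} w (m + 1))
    (hfin : (wValues w G).Finite) {a : G} (ha : a ∈ wValues (commWord m w) G) :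
    IsOfFinOrder a := by
  let σ : G →* Shrink.{u} G := (Shrink.mulEquiv (α := G)).symm.toMonoidHom
  have hσ : Function.Bijective σ := (Shrink.mulEquiv (α := G)).symm.bijective
  have hfin' : (wValues w (Shrink.{u} G)).Finite := by
    rw [← image_wValues_of_surjective hσ.surjective]
    exact hfin.image σ
  exact hσ.injective.isOfFinOrder_iff.1 (hw.isOfFinOrder hfin' (map_mem_wValues σ ha))

theorem IsFracConcise.exists_pow_mem_center [Group.FG G] (hw : IsFracConcise.{u} w (m + 1))
    (hG : IsFCw w G) {a : G} (ha : a ∈ wValues (commWord m w) G) :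
    ∃ e : ℕ, 0 < e ∧ a ^ e ∈ Subgroup.center G := by
  have := countable_of_group_fg (G ⧸ Subgroup.center G)
  have : Small.{u} (G ⧸ Subgroup.center G) := Countable.toSmall _
  obtain ⟨e, he, hpow⟩ := (hw.isOfFinOrder_of_small hG.finite_wValues_quotient_center
    (map_mem_wValues (QuotientGroup.mk' (Subgroup.center G)) ha)).exists_pow_eq_one
  exact ⟨e, he, (QuotientGroup.eq_one_iff (a ^ e)).1 hpow⟩

theorem IsFracConcise.exists_pow_mem_centralizer (hw : IsFracConcise.{u} w (m + 1))
    (hG : IsFCw w G) {S : Set G} (hS : S.Finite) {a : G}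
    (ha : a ∈ wValues (commWord m w) G) :
    ∃ e : ℕ, 0 < e ∧ a ^ e ∈ Subgroup.centralizer S := by
  obtain ⟨g, rfl⟩ := ha
  let H : Subgroup G := Subgroup.closure (S ∪ Set.range g)
  have : Finite ↥(S ∪ Set.range g) := hS.union (Set.finite_range g)
  have : Group.FG H := Group.closure_finite_fg _
  let g' : Fin (n + m) → H := fun i => ⟨g i, Subgroup.subset_closure (Or.inr ⟨i, rfl⟩)⟩
  have hval : (FreeGroup.lift g' (commWord m w) : G) = FreeGroup.lift g (commWord m w) :=
    map_freeGroup_lift H.subtype g' (commWord m w)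
  obtain ⟨e, he, hcenter⟩ :=
    hw.exists_pow_mem_center (hG.of_injective H.subtype_injective) ⟨g', rfl⟩
  refine ⟨e, he, Subgroup.mem_centralizer_iff.2 fun s hs => ?_⟩
  have hcomm := Subgroup.mem_center_iff.1 hcenter ⟨s, Subgroup.subset_closure (Or.inl hs)⟩
  simpa [hval] using congrArg Subtype.val hcomm

theorem IsFracConcise.exists_pow_mem_centralizer_of_mem_wValuesStar
    (hw : IsFracConcise.{u} w (m + 1)) (hG : IsFCw w G) {S : Set G} (hS : S.Finite) {a : G}
    (ha : a ∈ wValuesStar (commWord m w) G) :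
    ∃ e : ℕ, 0 < e ∧ a ^ e ∈ Subgroup.centralizer S := by
  rcases ha with ha | ha
  · exact hw.exists_pow_mem_centralizer hG hS ha
  · obtain ⟨e, he, hmem⟩ := hw.exists_pow_mem_centralizer hG hS (Set.mem_inv.1 ha)
    exact ⟨e, he, by simpa using hmem⟩

end Concise

/-- for a `(1/(m+1))`-concise word `w`, an `FC(w)`-group `G` and a finite
subset `B ⊆ G_v^*` (with `v = [w, x_{n+1}, ..., x_{n+m}]`), for any `x ∈ G` there is a
positive integer `e` with `b^e ∈ Z(⟨x, B⟩)` for all `b ∈ B`. -/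
theorem statement_2 {n : ℕ} (m : ℕ) (w : FreeGroup (Fin n))
    (hw : IsFracConcise w (m + 1)) (G : Type*) [Group G] (hFC : IsFCw w G)
    (B : Set G) (hBfin : B.Finite) (hBsub : B ⊆ wValuesStar (commWord m w) G)
    (x : G) :
    ∃ e : ℕ, 0 < e ∧ ∀ b ∈ B,
      b ^ e ∈ Subgroup.closure (insert x B) ⊓
        Subgroup.centralizer ((Subgroup.closure (insert x B) : Subgroup G) : Set G) := by
  obtain ⟨e, he, hcentralizes⟩ :=
    exists_pos_forall_pow_mem (N := (Subgroup.centralizer (insert x B)).toSubmonoid) hBfin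
      fun b hb => hw.exists_pow_mem_centralizer_of_mem_wValuesStar hFC (hBfin.insert x) (hBsub hb)
  refine ⟨e, he, fun b hb => ⟨?_, ?_⟩⟩
  · exact pow_mem (Subgroup.subset_closure (Set.mem_insert_of_mem x hb)) e
  · rw [Subgroup.centralizer_closure]
    exact hcentralizes b hb
end
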